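/- For every positive integer m, the following identities of polynomials with rational coefficients hold: U_{2m}(x) = P_m(4x² − 4) and 2·T_{2m}(x) = Q_m(4x² − 4), where T_n and U_n are the Chebyshev polynomials of the first and second kind. -/

import Mathlib

open Polynomial Finset

/-- `P_m(x) = Σ_{k=0}^{m} ((2m+1)/(2k+1))·binom(m+k,2k)·x^k`. -/
noncomputable def Ppoly (m : ℕ) : Polynomial ℚ :=
  ∑ k ∈ Finset.range (m + 1),
    Polynomial.C ((2 * m + 1 : ℚ) / (2 * k + 1) * (Nat.choose (m + k) (2 * k))) * Polynomial.X ^ k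

/-- `Q_m(x) = 2 + Σ_{k=1}^{m} (m/k)·binom(m+k−1,2k−1)·x^k`. -/
noncomputable def Qpoly (m : ℕ) : Polynomial ℚ :=
  Polynomial.C 2 + ∑ k ∈ Finset.Icc 1 m,
    Polynomial.C ((m : ℚ) / k * (Nat.choose (m + k - 1) (2 * k - 1))) * Polynomial.X ^ k

/-!
In the normalisation `S_n(2x) = U_n(x)`, `C_n(2x) = 2 T_n(x)`, doubling the index substitutes
`C_2 = x² - 2`: one has `S_{2m} = (S_m + S_{m-1})(x² - 2)` and `C_{2m} = C_m(x² - 2)`. Replacing `x`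
by `2x` turns `x² - 2` into `(4x² - 4) + 2`, so it remains to see that
`P_m(x) = (S_m + S_{m-1})(x + 2)` and `Q_m(x) = C_m(x + 2)`. Both follow by comparing coefficients,
since the coefficient of `x ^ k` in `S_{n-1}(x + 2)` is `binom(n + k, 2k + 1)`.
-/

lemma choose_add_two_add_choose (n k : ℕ) :
    (n + 2).choose (k + 2) + n.choose (k + 2) = n.choose k + 2 * (n + 1).choose (k + 2) := by
  have h₁ : (n + 2).choose (k + 2) = _ := Nat.choose_succ_succ' (n + 1) (k + 1)
  have h₂ : (n + 1).choose (k + 1) = _ := Nat.choose_succ_succ' n k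
  have h₃ : (n + 1).choose (k + 2) = _ := Nat.choose_succ_succ' n (k + 1)
  linarith

lemma comp_X_sq_sub_two_comp_two_mul_X {R : Type*} [CommRing R] (p : R[X]) :
    (p.comp (X ^ 2 - 2)).comp (2 * X) = (p.comp (X + 2)).comp (4 * X ^ 2 - 4) := by
  rw [comp_assoc, comp_assoc]
  congr 1
  simp only [add_comp, sub_comp, X_pow_comp, X_comp, ofNat_comp]
  ring

section Chebyshev

variable (R : Type*) [CommRing R]

lemma chebyshev_S_add_four (n : ℤ) :
    Chebyshev.S R (n + 4) = (X ^ 2 - 2) * Chebyshev.S R (n + 2) - Chebyshev.S R n := by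
  have h₂ := Chebyshev.S_add_two R n
  have h₃ := Chebyshev.S_add_two R (n + 1)
  have h₄ := Chebyshev.S_add_two R (n + 2)
  ring_nf at h₂ h₃ h₄ ⊢
  linear_combination h₄ + X * h₃ + h₂

lemma chebyshev_S_two_mul (n : ℤ) :
    Chebyshev.S R (2 * n) =
      (Chebyshev.S R n + Chebyshev.S R (n - 1)).comp (X ^ 2 - 2) := by
  induction n using Chebyshev.induct with
  | zero => simp
  | one =>
    rw [mul_one, sub_self, Chebyshev.S_two, Chebyshev.S_one, Chebyshev.S_zero, add_comp, X_comp,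
      one_comp]
    ring
  | add_two n ih₁ ih₀ =>
    have h₂ := Chebyshev.S_add_two R n
    have h₁ := Chebyshev.S_add_one R n
    have h := chebyshev_S_add_four R (2 * n)
    rw [show (2 * n + 4 : ℤ) = 2 * (n + 2) by ring, show (2 * n + 2 : ℤ) = 2 * (n + 1) by ring,
      ih₁, ih₀] at h
    rw [h, show (n + 2 - 1 : ℤ) = n + 1 by ring, h₂]
    simp only [add_sub_cancel_right, add_comp, sub_comp, mul_comp, X_comp, h₁]
    ring
  | neg_add_one n ih₀ ih₁ =>
    have h₁ := Chebyshev.S_sub_one R (-n)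
    have h₂ := Chebyshev.S_sub_two R (-n)
    have h := chebyshev_S_add_four R (2 * (-n - 1))
    rw [show (2 * (-n - 1) + 4 : ℤ) = 2 * (-n + 1) by ring,
      show (2 * (-n - 1) + 2 : ℤ) = 2 * -n by ring, ih₁, ih₀] at h
    rw [show (-n - 1 - 1 : ℤ) = -n - 2 by ring, h₂]
    simp only [add_sub_cancel_right, add_comp, sub_comp, mul_comp, X_comp, h₁] at h ⊢
    linear_combination h

lemma chebyshev_C_two_mul (n : ℤ) :
    Chebyshev.C R (2 * n) = (Chebyshev.C R n).comp (X ^ 2 - 2) := by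
  rw [mul_comm, Chebyshev.C_mul, Chebyshev.C_two]

lemma coeff_chebyshev_S_sub_one_comp_X_add_two (n k : ℕ) :
    ((Chebyshev.S R (n - 1)).comp (X + 2)).coeff k = (n + k).choose (2 * k + 1) := by
  induction n using Nat.twoStepInduction generalizing k with
  | zero => simp [Nat.choose_eq_zero_of_lt (show k < 2 * k + 1 by omega)]
  | one =>
    rcases k with _ | k
    · simp
    · simp [coeff_one, Nat.choose_eq_zero_of_lt (show 1 + (k + 1) < 2 * (k + 1) + 1 by omega)]
  | more n ih₀ ih₁ =>
    have h := Chebyshev.S_add_two R (n - 1)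
    rw [show (n - 1 + 2 : ℤ) = (n + 2 : ℕ) - 1 by push_cast; ring,
      show (n - 1 + 1 : ℤ) = (n + 1 : ℕ) - 1 by push_cast; ring] at h
    rw [h, sub_comp, mul_comp, X_comp, add_mul, coeff_sub, coeff_add, coeff_ofNat_mul]
    rcases k with _ | k
    · simp only [coeff_X_mul_zero, ih₀, ih₁, mul_zero, zero_add, add_zero, Nat.choose_one_right]
      push_cast
      ring
    · have pascal := congrArg (Nat.cast (R := R))
        (choose_add_two_add_choose (n + k + 1) (2 * k + 1))
      rw [coeff_X_mul, ih₀, ih₁, ih₁, show n + 2 + (k + 1) = n + k + 1 + 2 by ring,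
        show n + 1 + (k + 1) = n + k + 1 + 1 by ring, show n + 1 + k = n + k + 1 by ring,
        show n + (k + 1) = n + k + 1 by ring, show 2 * (k + 1) + 1 = 2 * k + 1 + 2 by ring]
      push_cast at pascal
      linear_combination -pascal

lemma coeff_chebyshev_S_comp_X_add_two (n k : ℕ) :
    ((Chebyshev.S R n).comp (X + 2)).coeff k = (n + k + 1).choose (2 * k + 1) := by
  simpa [add_right_comm] using coeff_chebyshev_S_sub_one_comp_X_add_two R (n + 1) k

lemma coeff_zero_chebyshev_C_comp_X_add_two (n : ℤ) :
    ((Chebyshev.C R n).comp (X + 2)).coeff 0 = 2 := by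
  simp [coeff_zero_eq_eval_zero, eval_comp]

lemma coeff_succ_chebyshev_C_comp_X_add_two (n k : ℕ) :
    ((Chebyshev.C R n).comp (X + 2)).coeff (k + 1) =
      2 * (n + k + 1).choose (2 * k + 2) - (n + k).choose (2 * k + 1) := by
  have pascal := congrArg (Nat.cast (R := R)) (Nat.choose_succ_succ' (n + k + 1) (2 * k + 2))
  push_cast at pascal
  rw [Chebyshev.C_eq_S_sub_X_mul_S, sub_comp, mul_comp, mul_comp, ofNat_comp, X_comp]
  simp only [add_mul, Nat.cast_ofNat, coeff_sub, coeff_add, coeff_ofNat_mul, coeff_X_mul,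
    coeff_chebyshev_S_comp_X_add_two, coeff_chebyshev_S_sub_one_comp_X_add_two]
  rw [← add_assoc n k 1, show 2 * (k + 1) + 1 = 2 * k + 2 + 1 by ring]
  linear_combination 2 * pascal

lemma succ_mul_coeff_succ_chebyshev_C_comp_X_add_two (n k : ℕ) :
    (k + 1) * ((Chebyshev.C R n).comp (X + 2)).coeff (k + 1) =
      n * ((n + k).choose (2 * k + 1) : R) := by
  have absorption := congrArg (Nat.cast (R := R)) (Nat.add_one_mul_choose_eq (n + k) (2 * k + 1))
  push_cast at absorption
  rw [coeff_succ_chebyshev_C_comp_X_add_two]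
  linear_combination -absorption

end Chebyshev

lemma coeff_Ppoly (m k : ℕ) :
    (Ppoly m).coeff k = (2 * m + 1 : ℚ) / (2 * k + 1) * (m + k).choose (2 * k) := by
  simp only [Ppoly, finsetSum_coeff, coeff_C_mul_X_pow, Finset.sum_ite_eq, Finset.mem_range]
  split_ifs with hk
  · rfl
  · rw [Nat.choose_eq_zero_of_lt (by omega), Nat.cast_zero, mul_zero]

lemma coeff_zero_Qpoly (m : ℕ) : (Qpoly m).coeff 0 = 2 := by
  simp [Qpoly, coeff_X_pow]

lemma coeff_succ_Qpoly (m k : ℕ) :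
    (Qpoly m).coeff (k + 1) = (m : ℚ) / (k + 1) * (m + k).choose (2 * k + 1) := by
  simp only [Qpoly, coeff_add, coeff_C_succ, zero_add, finsetSum_coeff, coeff_C_mul_X_pow,
    Finset.sum_ite_eq, Finset.mem_Icc]
  split_ifs with hk
  · rw [← add_assoc, Nat.add_sub_cancel, mul_add_one, Nat.cast_add_one]
    rfl
  · rw [Nat.choose_eq_zero_of_lt (by omega), Nat.cast_zero, mul_zero]

lemma Ppoly_eq_chebyshev_S_comp (m : ℕ) :
    Ppoly m = (Chebyshev.S ℚ m + Chebyshev.S ℚ (m - 1)).comp (X + 2) := by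
  ext k
  have pascal := congrArg (Nat.cast (R := ℚ)) (Nat.choose_succ_succ' (m + k) (2 * k))
  have absorption := congrArg (Nat.cast (R := ℚ)) (Nat.add_one_mul_choose_eq (m + k) (2 * k))
  push_cast at pascal absorption
  rw [coeff_Ppoly, add_comp, coeff_add, coeff_chebyshev_S_comp_X_add_two,
    coeff_chebyshev_S_sub_one_comp_X_add_two]
  field_simp
  linear_combination (2 * k + 1 : ℚ) * pascal + 2 * absorption

lemma Qpoly_eq_chebyshev_C_comp (m : ℕ) : Qpoly m = (Chebyshev.C ℚ m).comp (X + 2) := by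
  ext k
  rcases k with _ | k
  · rw [coeff_zero_Qpoly, coeff_zero_chebyshev_C_comp_X_add_two]
  · have hk : (k + 1 : ℚ) ≠ 0 := by positivity
    rw [coeff_succ_Qpoly, div_mul_eq_mul_div, div_eq_iff hk, mul_comm _ (k + 1 : ℚ),
      succ_mul_coeff_succ_chebyshev_C_comp_X_add_two]

theorem stmt_2 (m : ℕ) (hm : 0 < m) :
    Polynomial.Chebyshev.U ℚ (2 * m) =
      (Ppoly m).comp (4 * Polynomial.X ^ 2 - 4) ∧
    2 * Polynomial.Chebyshev.T ℚ (2 * m) =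
      (Qpoly m).comp (4 * Polynomial.X ^ 2 - 4) := by
  constructor
  · rw [← Chebyshev.S_comp_two_mul_X, chebyshev_S_two_mul, comp_X_sq_sub_two_comp_two_mul_X,
      Ppoly_eq_chebyshev_S_comp]
  · rw [← Chebyshev.C_comp_two_mul_X, chebyshev_C_two_mul, comp_X_sq_sub_two_comp_two_mul_X,
      Qpoly_eq_chebyshev_C_comp]
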